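/- (Convergence of value iteration with the DBS operator) Given a finite Markov decision process, let V* : S → ℝ satisfy T_m V* = V*, let (β_t)_{t≥1} be a sequence of positive reals with β_t → ∞, let V₀ : S → ℝ be arbitrary, and define V_t = T_{β_t}(T_{β_{t−1}}(… T_{β_1}(V₀)…)). Then ‖V_t − V*‖∞ → 0 as t → ∞; i.e., DBS value iteration converges to the optimal value function. -/

import Mathlib

/-!
The Bellman operator `Tm` is a contraction in the sup norm, and the Boltzmann average differs from
the maximum by at most `|A| / β`, uniformly in the averaged vector. Hence the DBS iterates form an
asymptotic pseudo-orbit of `Tm`: the distance from `V (t + 1)` to `Tm (V t)` tends to zero. Every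
such pseudo-orbit of a contraction converges to the fixed point, because the past errors are damped
geometrically.
-/

noncomputable def boltz {ι : Type*} [Fintype ι] (β : ℝ) (x : ι → ℝ) : ℝ :=
  (∑ i, Real.exp (β * x i) * x i) / ∑ i, Real.exp (β * x i)

noncomputable def fmax {ι : Type*} [Fintype ι] [Nonempty ι] (x : ι → ℝ) : ℝ :=
  Finset.univ.sup' Finset.univ_nonempty x

noncomputable def fmin {ι : Type*} [Fintype ι] [Nonempty ι] (x : ι → ℝ) : ℝ :=
  Finset.univ.inf' Finset.univ_nonempty x

noncomputable def Qval {S A : Type*} [Fintype S] (p : S → A → S → ℝ) (r : S → A → ℝ)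
    (γ : ℝ) (V : S → ℝ) (s : S) (a : A) : ℝ :=
  r s a + γ * ∑ s', p s a s' * V s'

noncomputable def Tm {S A : Type*} [Fintype S] [Fintype A] [Nonempty A]
    (p : S → A → S → ℝ) (r : S → A → ℝ) (γ : ℝ) (V : S → ℝ) (s : S) : ℝ :=
  fmax (Qval p r γ V s)

noncomputable def Tb {S A : Type*} [Fintype S] [Fintype A]
    (p : S → A → S → ℝ) (r : S → A → ℝ) (γ : ℝ) (β : ℝ) (V : S → ℝ) (s : S) : ℝ :=
  boltz β (Qval p r γ V s)

noncomputable def supNorm {S : Type*} [Fintype S] [Nonempty S] (V : S → ℝ) : ℝ :=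
  fmax (fun s => |V s|)

open Filter

lemma tendsto_zero_of_succ_le_mul_add {e c : ℕ → ℝ} {K : ℝ} (hK0 : 0 ≤ K) (hK1 : K < 1)
    (he : ∀ n, 0 ≤ e n) (hc : Tendsto c atTop (nhds 0))
    (hstep : ∀ n, e (n + 1) ≤ K * e n + c n) : Tendsto e atTop (nhds 0) := by
  refine tendsto_order.2 ⟨fun a ha => .of_forall fun n => ha.trans_le (he n), fun ε hε => ?_⟩
  have hδ : 0 < (1 - K) * (ε / 2) := mul_pos (sub_pos.2 hK1) (half_pos hε)
  obtain ⟨N, hN⟩ := eventually_atTop.1 (hc.eventually_lt_const hδ)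
  -- `ε / 2` is the fixed point of `x ↦ K * x + (1 - K) * (ε / 2)`, so `e - ε / 2` decays
  -- geometrically from `N` on.
  have hcontract (k : ℕ) : e (k + 1 + N) - ε / 2 ≤ K * (e (k + N) - ε / 2) := by
    have hstep_k := hstep (k + N)
    have hc_k := hN (k + N) (Nat.le_add_left N k)
    rw [Nat.add_right_comm k 1 N]
    linarith
  have hgeom (k : ℕ) : e (k + N) - ε / 2 ≤ K ^ k * (e N - ε / 2) := by
    simpa only [zero_add] using
      le_geom (u := fun k => e (k + N) - ε / 2) hK0 k fun m _ => hcontract m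
  have hpow : Tendsto (fun k : ℕ => K ^ k * (e N - ε / 2)) atTop (nhds 0) := by
    simpa only [zero_mul] using (tendsto_pow_atTop_nhds_zero_of_lt_one hK0 hK1).mul_const _
  rw [← map_add_atTop_eq_nat N, eventually_map]
  filter_upwards [hpow.eventually_lt_const (half_pos hε)] with k hk
  linarith [hgeom k]

lemma tendsto_fixedPoint_of_contractingWith {X : Type*} [MetricSpace X] {K : NNReal}
    {f : X → X} (hf : ContractingWith K f) {x : X} (hx : Function.IsFixedPt f x) {u : ℕ → X}
    (hu : Tendsto (fun n => dist (u (n + 1)) (f (u n))) atTop (nhds 0)) :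
    Tendsto u atTop (nhds x) := by
  refine tendsto_iff_dist_tendsto_zero.2 <| tendsto_zero_of_succ_le_mul_add K.coe_nonneg
    (NNReal.coe_lt_one.2 hf.1) (fun _ => dist_nonneg) hu fun n => ?_
  calc dist (u (n + 1)) x
      ≤ dist (u (n + 1)) (f (u n)) + dist (f (u n)) x := dist_triangle _ _ _
    _ = dist (u (n + 1)) (f (u n)) + dist (f (u n)) (f x) := by rw [hx.eq]
    _ ≤ dist (u (n + 1)) (f (u n)) + K * dist (u n) x := by gcongr; exact hf.2.dist_le_mul _ _
    _ = K * dist (u n) x + dist (u (n + 1)) (f (u n)) := add_comm _ _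

section Boltzmann

variable {ι : Type*} [Fintype ι] [Nonempty ι]

lemma le_fmax (x : ι → ℝ) (i : ι) : x i ≤ fmax x :=
  Finset.le_sup' x (Finset.mem_univ i)

lemma fmax_le {x : ι → ℝ} {c : ℝ} (h : ∀ i, x i ≤ c) : fmax x ≤ c :=
  Finset.sup'_le _ _ fun i _ => h i

lemma exists_eq_fmax (x : ι → ℝ) : ∃ i, x i = fmax x := by
  obtain ⟨i, -, hi⟩ := Finset.exists_mem_eq_sup' Finset.univ_nonempty x
  exact ⟨i, hi.symm⟩

lemma lipschitzWith_fmax : LipschitzWith 1 (fmax : (ι → ℝ) → ℝ) :=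
  LipschitzWith.of_le_add fun x y => fmax_le fun i => by
    have hdist : x i - y i ≤ dist x y := (le_abs_self _).trans (dist_le_pi_dist x y i)
    linarith [le_fmax y i]

lemma supNorm_eq_norm (x : ι → ℝ) : supNorm x = ‖x‖ :=
  le_antisymm (fmax_le (norm_le_pi_norm x))
    ((pi_norm_le_iff_of_nonempty x).2 (le_fmax fun i => |x i|))

lemma sum_exp_pos (x : ι → ℝ) : 0 < ∑ i, Real.exp (x i) :=
  Finset.sum_pos (fun _ _ => Real.exp_pos _) Finset.univ_nonempty

lemma sub_boltz (b c : ℝ) (x : ι → ℝ) :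
    c - boltz b x = (∑ i, Real.exp (b * x i) * (c - x i)) / ∑ i, Real.exp (b * x i) := by
  have hZ := (sum_exp_pos fun i => b * x i).ne'
  simp only [boltz, mul_sub, Finset.sum_sub_distrib, ← Finset.sum_mul]
  field_simp

lemma boltz_le_fmax (b : ℝ) (x : ι → ℝ) : boltz b x ≤ fmax x := by
  rw [← sub_nonneg, sub_boltz]
  have hgap (i : ι) : 0 ≤ fmax x - x i := sub_nonneg.2 (le_fmax x i)
  exact div_nonneg (Finset.sum_nonneg fun i _ => mul_nonneg (Real.exp_nonneg _) (hgap i))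
    (sum_exp_pos fun i => b * x i).le

lemma exp_mul_mul_sub_le {b : ℝ} (hb : 0 < b) (u v : ℝ) :
    Real.exp (b * u) * (v - u) ≤ Real.exp (b * v) / b := by
  rw [le_div_iff₀ hb]
  calc Real.exp (b * u) * (v - u) * b
      = Real.exp (b * u) * (b * (v - u)) := by ring
    _ ≤ Real.exp (b * u) * Real.exp (b * (v - u)) := by
        gcongr
        linarith [Real.add_one_le_exp (b * (v - u))]
    _ = Real.exp (b * v) := by rw [← Real.exp_add]; ring_nf

lemma exp_mul_fmax_le_sum_exp (b : ℝ) (x : ι → ℝ) :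
    Real.exp (b * fmax x) ≤ ∑ i, Real.exp (b * x i) := by
  obtain ⟨j, hj⟩ := exists_eq_fmax x
  rw [← hj]
  exact Finset.single_le_sum (f := fun i => Real.exp (b * x i))
    (fun _ _ => Real.exp_nonneg _) (Finset.mem_univ j)

lemma fmax_sub_boltz_le {b : ℝ} (hb : 0 < b) (x : ι → ℝ) :
    fmax x - boltz b x ≤ Fintype.card ι / b := by
  rw [sub_boltz, div_le_iff₀ (sum_exp_pos fun i => b * x i)]
  calc ∑ i, Real.exp (b * x i) * (fmax x - x i)
      ≤ ∑ _i : ι, Real.exp (b * fmax x) / b :=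
        Finset.sum_le_sum fun i _ => exp_mul_mul_sub_le hb (x i) (fmax x)
    _ = Fintype.card ι / b * Real.exp (b * fmax x) := by
        rw [Finset.sum_const, Finset.card_univ, nsmul_eq_mul]; ring
    _ ≤ Fintype.card ι / b * ∑ i, Real.exp (b * x i) := by
        gcongr
        exact exp_mul_fmax_le_sum_exp b x

lemma dist_boltz_fmax_le {b : ℝ} (hb : 0 < b) (x : ι → ℝ) :
    dist (boltz b x) (fmax x) ≤ Fintype.card ι / b := by
  rw [dist_comm, Real.dist_eq, abs_of_nonneg (sub_nonneg.2 (boltz_le_fmax b x))]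
  exact fmax_sub_boltz_le hb x

end Boltzmann

section Bellman

variable {S A : Type*} [Fintype S]

lemma dist_Qval_le (p : S → A → S → ℝ) (r : S → A → ℝ) (γ : ℝ) (V W : S → ℝ) (s : S) (a : A) :
    dist (Qval p r γ V s a) (Qval p r γ W s a) ≤ (|γ| * ∑ s', |p s a s'|) * dist V W := by
  have hsub : Qval p r γ V s a - Qval p r γ W s a = γ * ∑ s', p s a s' * (V s' - W s') := by
    simp only [Qval, mul_sub, Finset.sum_sub_distrib]
    ring
  rw [Real.dist_eq, hsub, abs_mul, mul_assoc, Finset.sum_mul]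
  gcongr
  refine (Finset.abs_sum_le_sum_abs _ _).trans (Finset.sum_le_sum fun s' _ => ?_)
  rw [abs_mul]
  gcongr
  exact dist_le_pi_dist V W s'

variable [Fintype A] [Nonempty A]

lemma lipschitzWith_Tm {p : S → A → S → ℝ} {γ : ℝ} {κ : NNReal}
    (hκ : ∀ s a, |γ| * ∑ s', |p s a s'| ≤ κ) (r : S → A → ℝ) :
    LipschitzWith κ (Tm p r γ) := by
  refine LipschitzWith.of_dist_le_mul fun V W => ?_
  have hnonneg : 0 ≤ κ * dist V W := by positivity
  refine (dist_pi_le_iff hnonneg).2 fun s => ?_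
  calc dist (fmax (Qval p r γ V s)) (fmax (Qval p r γ W s))
      ≤ dist (Qval p r γ V s) (Qval p r γ W s) := by
        simpa only [NNReal.coe_one, one_mul] using
          lipschitzWith_fmax.dist_le_mul (Qval p r γ V s) (Qval p r γ W s)
    _ ≤ κ * dist V W := (dist_pi_le_iff hnonneg).2 fun a =>
        (dist_Qval_le p r γ V W s a).trans (by gcongr; exact hκ s a)

lemma dist_Tb_Tm_le (p : S → A → S → ℝ) (r : S → A → ℝ) (γ : ℝ) {b : ℝ} (hb : 0 < b)
    (V : S → ℝ) : dist (Tb p r γ b V) (Tm p r γ V) ≤ Fintype.card A / b :=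
  (dist_pi_le_iff (by positivity)).2 fun s => dist_boltz_fmax_le hb (Qval p r γ V s)

end Bellman

theorem dbs_value_iteration_converges_general {S A : Type*} [Fintype S] [Fintype A] [Nonempty S]
    [Nonempty A] (p : S → A → S → ℝ) (r : S → A → ℝ) (γ : ℝ)
    {κ : NNReal} (hκ1 : κ < 1) (hκ : ∀ s a, |γ| * ∑ s', |p s a s'| ≤ κ)
    (Vstar : S → ℝ) (hVstar : Tm p r γ Vstar = Vstar)
    (β : ℕ → ℝ) (hβtop : Tendsto β atTop atTop) (Vseq : ℕ → S → ℝ)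
    (hVsucc : ∀ t, Vseq (t + 1) = Tb p r γ (β (t + 1)) (Vseq t)) :
    Tendsto (fun t => supNorm (fun s => Vseq t s - Vstar s)) atTop (nhds 0) := by
  have hβsucc : Tendsto (fun t => β (t + 1)) atTop atTop :=
    hβtop.comp (tendsto_add_atTop_nat 1)
  have hpseudo : Tendsto (fun t => dist (Vseq (t + 1)) (Tm p r γ (Vseq t))) atTop (nhds 0) := by
    refine squeeze_zero' (.of_forall fun _ => dist_nonneg) ?_
      (hβsucc.const_div_atTop (Fintype.card A : ℝ))
    filter_upwards [hβsucc.eventually_gt_atTop 0] with t ht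
    rw [hVsucc]
    exact dist_Tb_Tm_le p r γ ht (Vseq t)
  have hlim : Tendsto Vseq atTop (nhds Vstar) :=
    tendsto_fixedPoint_of_contractingWith ⟨hκ1, lipschitzWith_Tm hκ r⟩ hVstar hpseudo
  simp only [supNorm_eq_norm]
  exact tendsto_iff_norm_sub_tendsto_zero.1 hlim

theorem dbs_value_iteration_converges {S A : Type*} [Fintype S] [Fintype A] [Nonempty S] [Nonempty A]
    (p : S → A → S → ℝ) (hp0 : ∀ s a s', 0 ≤ p s a s') (hp1 : ∀ s a, ∑ s', p s a s' = 1)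
    (r : S → A → ℝ) (γ : ℝ) (hγ0 : 0 ≤ γ) (hγ1 : γ < 1)
    (Vstar : S → ℝ) (hVstar : Tm p r γ Vstar = Vstar)
    (β : ℕ → ℝ) (hβpos : ∀ t ≥ 1, 0 < β t) (hβtop : Tendsto β atTop atTop)
    (V₀ : S → ℝ) (Vseq : ℕ → S → ℝ)
    (hV0 : Vseq 0 = V₀)
    (hVsucc : ∀ t, Vseq (t + 1) = Tb p r γ (β (t + 1)) (Vseq t)) :
    Tendsto (fun t => supNorm (fun s => Vseq t s - Vstar s)) atTop (nhds 0) := by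
  lift γ to NNReal using hγ0
  exact dbs_value_iteration_converges_general p r γ (NNReal.coe_lt_one.1 hγ1)
    (fun s a => by simp [abs_of_nonneg, hp0, hp1]) Vstar hVstar β hβtop Vseq hVsucc
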